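/- arXiv:2404.00836 — 2 statements merged into one kernel-verified Lean document; each statement's English description precedes it below -/
import Mathlib

section
/- Fix a model point w ∈ E, a step size γ ≥ 0, and a variance level σ² ≥ 0. Let G : Ω → E be a Bochner-integrable random vector with ∫ G dμ = ∇L(w) (unbiased gradient estimate), with ω ↦ ‖G ω‖² integrable and ∫ ‖G ω − ∇L(w)‖² dμ ≤ σ² (variance bound), and assume ω ↦ L(w − γ • G ω) is integrable. Then the expected one-step SGD descent satisfies ∫ L(w − γ • G ω) dμ(ω) − L(w) ≤ −γ·(1 − ρ·γ/2)·‖∇L(w)‖² + (ρ·γ²/2)·σ². -/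
/-!
Evaluating the smoothness bound at the random point `w - γ • G` and integrating gives
`L w - γ * ‖∇L w‖ ^ 2 + ρ * γ ^ 2 / 2 * 𝔼 ‖G‖ ^ 2`, because unbiasedness turns the linear term into
`‖∇L w‖ ^ 2`. The second moment splits as `𝔼 ‖G‖ ^ 2 = 𝔼 ‖G - ∇L w‖ ^ 2 + ‖∇L w‖ ^ 2`: the first
part is the noise, and the second weakens the decrease by the factor `1 - ρ * γ / 2`.
-/

open MeasureTheory
open scoped RealInnerProductSpace

section

variable {E : Type*} [NormedAddCommGroup E] [InnerProductSpace ℝ E]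

lemma apply_sub_smul_le_of_quadratic_upper_bound {L : E → ℝ} {w g : E} {ρ : ℝ}
    (hL : ∀ u, L u ≤ L w + ⟪g, u - w⟫ + ρ / 2 * ‖u - w‖ ^ 2) (γ : ℝ) (x : E) :
    L (w - γ • x) ≤ L w - γ * ⟪g, x⟫ + ρ * γ ^ 2 / 2 * ‖x‖ ^ 2 := by
  calc L (w - γ • x) ≤ L w + ⟪g, -(γ • x)⟫ + ρ / 2 * ‖-(γ • x)‖ ^ 2 := by
        simpa only [sub_sub_cancel_left] using hL (w - γ • x)
    _ = L w - γ * ⟪g, x⟫ + ρ * γ ^ 2 / 2 * ‖x‖ ^ 2 := by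
        rw [inner_neg_right, real_inner_smul_right, norm_neg, norm_smul, mul_pow,
          Real.norm_eq_abs, sq_abs]
        ring

variable [CompleteSpace E] {Ω : Type*} [MeasurableSpace Ω] {μ : Measure Ω} {X : Ω → E}

lemma integral_norm_sub_sq_real [IsFiniteMeasure μ] (hX : Integrable X μ)
    (hX2 : Integrable (fun ω => ‖X ω‖ ^ 2) μ) (c : E) :
    ∫ ω, ‖X ω - c‖ ^ 2 ∂μ =
      ∫ ω, ‖X ω‖ ^ 2 ∂μ - 2 * ⟪c, ∫ ω, X ω ∂μ⟫ + μ.real Set.univ * ‖c‖ ^ 2 := by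
  have hinner : Integrable (fun ω => 2 * ⟪c, X ω⟫) μ := (hX.const_inner c).const_mul 2
  have hdiff : Integrable (fun ω => ‖X ω‖ ^ 2 - 2 * ⟪c, X ω⟫) μ := hX2.sub hinner
  calc ∫ ω, ‖X ω - c‖ ^ 2 ∂μ = ∫ ω, (‖X ω‖ ^ 2 - 2 * ⟪c, X ω⟫ + ‖c‖ ^ 2) ∂μ := by
        simp only [norm_sub_sq_real, real_inner_comm]
    _ = ∫ ω, ‖X ω‖ ^ 2 ∂μ - 2 * ⟪c, ∫ ω, X ω ∂μ⟫ + μ.real Set.univ * ‖c‖ ^ 2 := by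
        rw [integral_add hdiff (integrable_const _), integral_sub hX2 hinner,
          integral_const_mul, integral_inner hX, integral_const, smul_eq_mul]

variable [IsProbabilityMeasure μ]

lemma integral_norm_sub_integral_sq (hX : Integrable X μ)
    (hX2 : Integrable (fun ω => ‖X ω‖ ^ 2) μ) :
    ∫ ω, ‖X ω - ∫ ω', X ω' ∂μ‖ ^ 2 ∂μ = ∫ ω, ‖X ω‖ ^ 2 ∂μ - ‖∫ ω, X ω ∂μ‖ ^ 2 := by
  rw [integral_norm_sub_sq_real hX hX2, real_inner_self_eq_norm_sq, probReal_univ]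
  ring

lemma integral_apply_sub_smul_le_of_quadratic_upper_bound {L : E → ℝ} {w g : E} {ρ γ : ℝ}
    (hL : ∀ u, L u ≤ L w + ⟪g, u - w⟫ + ρ / 2 * ‖u - w‖ ^ 2) (hX : Integrable X μ)
    (hX2 : Integrable (fun ω => ‖X ω‖ ^ 2) μ)
    (hLX : Integrable (fun ω => L (w - γ • X ω)) μ) :
    ∫ ω, L (w - γ • X ω) ∂μ ≤
      L w - γ * ⟪g, ∫ ω, X ω ∂μ⟫ + ρ * γ ^ 2 / 2 * ∫ ω, ‖X ω‖ ^ 2 ∂μ := by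
  have hinner : Integrable (fun ω => γ * ⟪g, X ω⟫) μ := (hX.const_inner g).const_mul γ
  have hlin : Integrable (fun ω => L w - γ * ⟪g, X ω⟫) μ := (integrable_const _).sub hinner
  have hquad : Integrable (fun ω => ρ * γ ^ 2 / 2 * ‖X ω‖ ^ 2) μ := hX2.const_mul _
  calc ∫ ω, L (w - γ • X ω) ∂μ
      ≤ ∫ ω, (L w - γ * ⟪g, X ω⟫ + ρ * γ ^ 2 / 2 * ‖X ω‖ ^ 2) ∂μ :=
        integral_mono hLX (hlin.add hquad) fun ω =>
          apply_sub_smul_le_of_quadratic_upper_bound hL γ (X ω)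
    _ = L w - γ * ⟪g, ∫ ω, X ω ∂μ⟫ + ρ * γ ^ 2 / 2 * ∫ ω, ‖X ω‖ ^ 2 ∂μ := by
        rw [integral_add hlin hquad, integral_sub (integrable_const _) hinner,
          integral_const_mul, integral_const_mul, integral_inner hX, integral_const,
          probReal_univ, one_smul]

theorem expected_one_step_sgd_descent_general {L : E → ℝ} {G : Ω → E} {w g : E} {ρ γ : ℝ}
    (hL : ∀ u, L u ≤ L w + ⟪g, u - w⟫ + ρ / 2 * ‖u - w‖ ^ 2) (hG : Integrable G μ)
    (hunbiased : ∫ ω, G ω ∂μ = g) (hG2 : Integrable (fun ω => ‖G ω‖ ^ 2) μ)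
    (hLG : Integrable (fun ω => L (w - γ • G ω)) μ) :
    (∫ ω, L (w - γ • G ω) ∂μ) - L w ≤
      -γ * (1 - ρ * γ / 2) * ‖g‖ ^ 2 + ρ * γ ^ 2 / 2 * ∫ ω, ‖G ω - g‖ ^ 2 ∂μ := by
  subst hunbiased
  have hdescent := integral_apply_sub_smul_le_of_quadratic_upper_bound hL hG hG2 hLG
  rw [real_inner_self_eq_norm_sq] at hdescent
  rw [integral_norm_sub_integral_sq hG hG2]
  linarith

end

/-- One-step expected SGD descent bound under ρ-smoothness, unbiased gradient
estimate and variance bound σ². -/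
theorem expected_one_step_sgd_descent
    {E : Type*} [NormedAddCommGroup E] [InnerProductSpace ℝ E] [CompleteSpace E]
    {Ω : Type*} [MeasurableSpace Ω] (μ : Measure Ω) [IsProbabilityMeasure μ]
    (L : E → ℝ) (gradL : E → E) (ρ : ℝ) (hρ : 0 ≤ ρ)
    (hsmooth : ∀ u v : E, L u ≤ L v + ⟪gradL v, u - v⟫ + ρ / 2 * ‖u - v‖ ^ 2)
    (w : E) (γ σ2 : ℝ) (hγ : 0 ≤ γ) (hσ2 : 0 ≤ σ2)
    (G : Ω → E) (hGint : Integrable G μ)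
    (hunbiased : ∫ ω, G ω ∂μ = gradL w)
    (hG2 : Integrable (fun ω => ‖G ω‖ ^ 2) μ)
    (hvar : ∫ ω, ‖G ω - gradL w‖ ^ 2 ∂μ ≤ σ2)
    (hLint : Integrable (fun ω => L (w - γ • G ω)) μ) :
    (∫ ω, L (w - γ • G ω) ∂μ) - L w ≤
      -γ * (1 - ρ * γ / 2) * ‖gradL w‖ ^ 2 + ρ * γ ^ 2 / 2 * σ2 := by
  have hnoise := mul_le_mul_of_nonneg_left hvar (by positivity : 0 ≤ ρ * γ ^ 2 / 2)
  linarith [expected_one_step_sgd_descent_general (hsmooth · w) hGint hunbiased hG2 hLint]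
end

section
/- Fix g ∈ E, K ≥ 1, batch sizes B k > 0 for k = 1,…,K with B_tot = Σ_k B k and weights λ k = B k / B_tot, and α̂ ≥ 0. Let G k : Ω → E be Bochner-integrable random vectors with ∫ G k dμ = g, with ω ↦ ‖G k ω‖² integrable and ∫ ‖G k ω − g‖² dμ ≤ α̂²/(B k) for each k. Then the second moment of the aggregated estimate satisfies ∫ ‖Σ_k λ k • G k ω‖² dμ(ω) ≤ ‖g‖² + K·α̂²/B_tot. -/
open MeasureTheory

/-!
The second moment of a random vector is the squared norm of its mean plus its variance
`∫ ‖X - 𝔼 X‖²`. By Jensen's inequality for `‖·‖²`, applied to the centred vectors, the variance of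
a convex combination is at most the convex combination of the variances. With weights
`B k / ∑ j, B j` and variances at most `αhat² / B k` the factors `B k` cancel, so each of the `K`
devices contributes `αhat² / ∑ j, B j`.
-/

lemma integral_norm_sq_eq_norm_integral_sq_add {E Ω : Type*} [NormedAddCommGroup E]
    [InnerProductSpace ℝ E] [CompleteSpace E] {_ : MeasurableSpace Ω} {μ : Measure Ω}
    [IsProbabilityMeasure μ] {Y : Ω → E} (hY : MemLp Y 2 μ) :
    ∫ ω, ‖Y ω‖ ^ 2 ∂μ = ‖∫ ω, Y ω ∂μ‖ ^ 2 + ∫ ω, ‖Y ω - ∫ ω', Y ω' ∂μ‖ ^ 2 ∂μ := by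
  set m := ∫ ω, Y ω ∂μ
  have hY_int : Integrable Y μ := hY.integrable one_le_two
  have hY_sq : Integrable (fun ω => ‖Y ω‖ ^ 2) μ := hY.integrable_norm_pow two_ne_zero
  have h_inner : Integrable (fun ω => 2 * inner ℝ m (Y ω)) μ :=
    (hY_int.const_inner m).const_mul 2
  have h_diff : Integrable (fun ω => ‖Y ω‖ ^ 2 - 2 * inner ℝ m (Y ω)) μ := hY_sq.sub h_inner
  have h_var : ∫ ω, ‖Y ω - m‖ ^ 2 ∂μ = ∫ ω, ‖Y ω‖ ^ 2 ∂μ - ‖m‖ ^ 2 :=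
    calc ∫ ω, ‖Y ω - m‖ ^ 2 ∂μ
        = ∫ ω, (‖Y ω‖ ^ 2 - 2 * inner ℝ m (Y ω) + ‖m‖ ^ 2) ∂μ := by
          simp only [norm_sub_sq_real, real_inner_comm]
      _ = ∫ ω, ‖Y ω‖ ^ 2 ∂μ - 2 * inner ℝ m m + ‖m‖ ^ 2 := by
          rw [integral_add h_diff (integrable_const _), integral_sub hY_sq h_inner,
            integral_const_mul, integral_inner hY_int, integral_const, probReal_univ, one_smul]
      _ = ∫ ω, ‖Y ω‖ ^ 2 ∂μ - ‖m‖ ^ 2 := by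
          rw [real_inner_self_eq_norm_sq]
          ring
  rw [h_var, add_sub_cancel]

section ConvexCombination

variable {ι E Ω : Type*} {s : Finset ι} {w : ι → ℝ}

lemma norm_sum_smul_pow_le [SeminormedAddCommGroup E] [NormedSpace ℝ E]
    (hw : ∀ i ∈ s, 0 ≤ w i) (hw_sum : ∑ i ∈ s, w i = 1) (x : ι → E) (n : ℕ) :
    ‖∑ i ∈ s, w i • x i‖ ^ n ≤ ∑ i ∈ s, w i * ‖x i‖ ^ n :=
  (convexOn_univ_norm.pow (fun _ _ => norm_nonneg _) n).map_sum_le hw hw_sum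
    fun _ _ => Set.mem_univ _

variable {_ : MeasurableSpace Ω} {μ : Measure Ω} {X : ι → Ω → E}

lemma integral_norm_sum_smul_pow_le [SeminormedAddCommGroup E] [NormedSpace ℝ E]
    (hw : ∀ i ∈ s, 0 ≤ w i) (hw_sum : ∑ i ∈ s, w i = 1) {n : ℕ}
    (hX : ∀ i ∈ s, Integrable (fun ω => ‖X i ω‖ ^ n) μ) :
    ∫ ω, ‖∑ i ∈ s, w i • X i ω‖ ^ n ∂μ ≤ ∑ i ∈ s, w i * ∫ ω, ‖X i ω‖ ^ n ∂μ := by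
  have hwX : ∀ i ∈ s, Integrable (fun ω => w i * ‖X i ω‖ ^ n) μ :=
    fun i hi => (hX i hi).const_mul (w i)
  calc ∫ ω, ‖∑ i ∈ s, w i • X i ω‖ ^ n ∂μ
      ≤ ∫ ω, ∑ i ∈ s, w i * ‖X i ω‖ ^ n ∂μ :=
        integral_mono_of_nonneg (.of_forall fun _ => by positivity) (integrable_finsetSum s hwX)
          (.of_forall fun ω => norm_sum_smul_pow_le hw hw_sum (X · ω) n)
    _ = ∑ i ∈ s, w i * ∫ ω, ‖X i ω‖ ^ n ∂μ := by
        simp only [integral_finsetSum s hwX, integral_const_mul]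

variable [NormedAddCommGroup E] [InnerProductSpace ℝ E] [CompleteSpace E] [IsProbabilityMeasure μ]

lemma integral_norm_sum_smul_sq_le_norm_sum_sq_add
    (hw : ∀ i ∈ s, 0 ≤ w i) (hw_sum : ∑ i ∈ s, w i = 1)
    (hX : ∀ i ∈ s, MemLp (X i) 2 μ) :
    ∫ ω, ‖∑ i ∈ s, w i • X i ω‖ ^ 2 ∂μ ≤
      ‖∑ i ∈ s, w i • ∫ ω, X i ω ∂μ‖ ^ 2 +
        ∑ i ∈ s, w i * ∫ ω, ‖X i ω - ∫ ω', X i ω' ∂μ‖ ^ 2 ∂μ := by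
  have hwX : ∀ i ∈ s, MemLp (fun ω => w i • X i ω) 2 μ := fun i hi => (hX i hi).const_smul (w i)
  have h_mean : ∫ ω, ∑ i ∈ s, w i • X i ω ∂μ = ∑ i ∈ s, w i • ∫ ω, X i ω ∂μ := by
    simp only [integral_finsetSum s fun i hi => (hwX i hi).integrable one_le_two, integral_smul]
  have h_dev : ∀ ω, ∑ i ∈ s, w i • X i ω - ∑ i ∈ s, w i • ∫ ω', X i ω' ∂μ =
      ∑ i ∈ s, w i • (X i ω - ∫ ω', X i ω' ∂μ) := fun ω => by
    simp only [smul_sub, Finset.sum_sub_distrib]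
  have h_dev_sq : ∀ i ∈ s, Integrable (fun ω => ‖X i ω - ∫ ω', X i ω' ∂μ‖ ^ 2) μ :=
    fun i hi => ((hX i hi).sub (memLp_const _)).integrable_norm_pow two_ne_zero
  have h_memLp : MemLp (fun ω => ∑ i ∈ s, w i • X i ω) 2 μ := memLp_finsetSum s hwX
  rw [integral_norm_sq_eq_norm_integral_sq_add h_memLp, h_mean]
  simp only [h_dev]
  gcongr
  exact integral_norm_sum_smul_pow_le hw hw_sum h_dev_sq

end ConvexCombination

lemma sum_div_mul_div_eq_card_mul_div {ι 𝕜 : Type*} [Semifield 𝕜] {s : Finset ι} {b : ι → 𝕜}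
    (hb : ∀ i ∈ s, b i ≠ 0) (a c : 𝕜) :
    ∑ i ∈ s, b i / c * (a / b i) = s.card * a / c := by
  have h_term : ∀ i ∈ s, b i / c * (a / b i) = a / c := fun i hi => by
    rw [mul_comm, div_mul_div_cancel₀ (hb i hi)]
  rw [Finset.sum_congr rfl h_term, Finset.sum_const, nsmul_eq_mul, mul_div_assoc]

/-- Second-moment bound for the aggregated gradient estimate: Jensen's
inequality for ‖·‖² combined with the per-device variance bounds. -/
theorem aggregated_second_moment_bound
    {E : Type*} [NormedAddCommGroup E] [InnerProductSpace ℝ E] [CompleteSpace E]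
    {Ω : Type*} [MeasurableSpace Ω] (μ : Measure Ω) [IsProbabilityMeasure μ]
    (g : E) (K : ℕ) (hK : 1 ≤ K) (B : Fin K → ℝ) (hB : ∀ k, 0 < B k)
    (αhat : ℝ) (hα : 0 ≤ αhat)
    (G : Fin K → Ω → E) (hGint : ∀ k, Integrable (G k) μ)
    (hmean : ∀ k, ∫ ω, G k ω ∂μ = g)
    (hG2 : ∀ k, Integrable (fun ω => ‖G k ω‖ ^ 2) μ)
    (hvar : ∀ k, ∫ ω, ‖G k ω - g‖ ^ 2 ∂μ ≤ αhat ^ 2 / B k) :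
    ∫ ω, ‖∑ k, (B k / ∑ j, B j) • G k ω‖ ^ 2 ∂μ ≤
      ‖g‖ ^ 2 + K * αhat ^ 2 / ∑ k, B k := by
  have : Nonempty (Fin K) := ⟨⟨0, hK⟩⟩
  have hB_sum : 0 < ∑ j, B j := Finset.sum_pos (fun k _ => hB k) Finset.univ_nonempty
  have hw : ∀ k, 0 ≤ B k / ∑ j, B j := fun k => div_nonneg (hB k).le hB_sum.le
  have hw_sum : ∑ k, B k / ∑ j, B j = 1 := by rw [← Finset.sum_div, div_self hB_sum.ne']
  have hG : ∀ k, MemLp (G k) 2 μ := fun k =>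
    (memLp_two_iff_integrable_sq_norm (hGint k).aestronglyMeasurable).2 (hG2 k)
  calc ∫ ω, ‖∑ k, (B k / ∑ j, B j) • G k ω‖ ^ 2 ∂μ
      ≤ ‖g‖ ^ 2 + ∑ k, B k / (∑ j, B j) * ∫ ω, ‖G k ω - g‖ ^ 2 ∂μ := by
        simpa only [hmean, ← Finset.sum_smul, hw_sum, one_smul] using
          integral_norm_sum_smul_sq_le_norm_sum_sq_add (fun k _ => hw k) hw_sum fun k _ => hG k
    _ ≤ ‖g‖ ^ 2 + ∑ k, B k / (∑ j, B j) * (αhat ^ 2 / B k) := by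
        gcongr with k
        exacts [hw k, hvar k]
    _ = ‖g‖ ^ 2 + K * αhat ^ 2 / ∑ k, B k := by
        rw [sum_div_mul_div_eq_card_mul_div fun k _ => (hB k).ne', Finset.card_fin]
end
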